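/- Let S be a CFCST system over Σ. (i) Every labelled sequent derivable in Km(S)L is Km(S)-valid. (ii) For every formula φ that is Km(S)-valid, the labelled sequent ∅ ⊢ w:φ is derivable in Km(S)L. -/

import Mathlib

/-!
Labelled sequent calculi for context-free grammar logics with converse.
-/

namespace GrammarLogic

/-- Modal formulae in negation normal form over the alphabet `α`:
literals `p`, `p̄`, and the connectives `∨`, `∧`, `⟨x⟩`, `[x]` (`x ∈ α`). -/
inductive Fml (α : Type) : Type
  | pos : ℕ → Fml α
  | neg : ℕ → Fml α
  | or  : Fml α → Fml α → Fml α
  | and : Fml α → Fml α → Fml α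
  | dia : α → Fml α → Fml α
  | box : α → Fml α → Fml α

/-- Multisets of relational atoms `R_x w u` (labels are natural numbers). -/
abbrev RAtms (α : Type) : Type := Multiset (α × ℕ × ℕ)

/-- Multisets of labelled formulae `w : φ`. -/
abbrev LFmls (α : Type) : Type := Multiset (ℕ × Fml α)

/-- The converse `s̄` of a string: reverse and apply the converse characterwise. -/
def strConv {α : Type} (bar : α → α) (s : List α) : List α := s.reverse.map bar

/-- A context-free converse-closed string rewriting (CFCST) system over `α`
with converse operation `bar`: a finite set of production rules closed under
converses. -/
structure CFCST (α : Type) (bar : α → α) : Type where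
  rules : Set (α × List α)
  finite : rules.Finite
  closed : ∀ x s, (x, s) ∈ rules ↔ (bar x, strConv bar s) ∈ rules

/-- One-step rewriting: replace an occurrence of the head of a production rule
by its body. -/
def OneStep {α : Type} (P : Set (α × List α)) (s t : List α) : Prop :=
  ∃ u v x r, (x, r) ∈ P ∧ s = u ++ x :: v ∧ t = u ++ r ++ v

/-- `Lang P x s` iff `x →*_S s`, i.e. `s ∈ L_S(x)`. -/
def Lang {α : Type} (P : Set (α × List α)) (x : α) (s : List α) : Prop :=
  Relation.ReflTransGen (OneStep P) [x] s

/-- Edges of the propagation graph determined by the relational atoms `R`: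
each `R_x w u` in `R` gives an edge `(w,u)` labelled `x` and an edge `(u,w)`
labelled `x̄`. -/
def Edge {α : Type} (bar : α → α) (R : RAtms α) (w u : ℕ) (c : α) : Prop :=
  (c, w, u) ∈ R ∨ (bar c, u, w) ∈ R

/-- `PPath bar R w u s`: there is a (possibly empty) propagation path from `w`
to `u` in the propagation graph determined by `R` whose string is `s`. -/
inductive PPath {α : Type} (bar : α → α) (R : RAtms α) : ℕ → ℕ → List α → Prop
  | nil (w : ℕ) : PPath bar R w w []
  | cons {w u v : ℕ} {c : α} {s : List α} :
      Edge bar R w u c → PPath bar R u v s → PPath bar R w v (c :: s)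

/-- Side condition of the propagation rule `(Pr_⟨x⟩)`: there is a propagation
path from `w` to `u` whose string belongs to `L_S(x)`. -/
def PropCond {α : Type} (bar : α → α) (P : Set (α × List α)) (R : RAtms α)
    (x : α) (w u : ℕ) : Prop :=
  ∃ s, PPath bar R w u s ∧ Lang P x s

/-- The label `v` occurs in the labelled sequent `R ⊢ Γ`. -/
def occursIn {α : Type} (v : ℕ) (R : RAtms α) (Γ : LFmls α) : Prop :=
  (∃ x w u, (x, w, u) ∈ R ∧ (v = w ∨ v = u)) ∨ ∃ φ, (v, φ) ∈ Γ

/-- `ChainR s w u C`: the multiset `C` is a chain of relational atoms `R_s w u`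
(for `s = ε` it is empty and `u = w`). -/
inductive ChainR {α : Type} : List α → ℕ → ℕ → RAtms α → Prop
  | nil (w : ℕ) : ChainR [] w w 0
  | cons {y : α} {s : List α} {w v u : ℕ} {C : RAtms α} :
      ChainR s v u C → ChainR (y :: s) w u ((y, w, v) ::ₘ C)

/-- Gated labelled sequent calculi for grammar logics.  The rules `(id)`, `(∨r)`,
`(∧r)` and `([x])` are always present; the rules `(⟨x⟩)`, the propagation rules
`(Pr_⟨x⟩)`, the structural rules `(p^x_s)` (for `x → s ∈ P`) and the converse
rules `(C1^x)` are present exactly when the respective gates `gDia`, `gPr`,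
`gProd`, `gCnv` hold.  In particular, `Der bar P True False True True` is the
labelled calculus `G3Km(S)` and `Der bar P False True False False` is the
refined labelled calculus `Km(S)L`. -/
inductive Der {α : Type} (bar : α → α) (P : Set (α × List α))
    (gDia gPr gProd gCnv : Prop) : RAtms α → LFmls α → Prop
  | id (R : RAtms α) (Γ : LFmls α) (w p : ℕ) :
      Der bar P gDia gPr gProd gCnv R ((w, Fml.pos p) ::ₘ (w, Fml.neg p) ::ₘ Γ)
  | orr {R : RAtms α} {Γ : LFmls α} {w : ℕ} {φ ψ : Fml α} :
      Der bar P gDia gPr gProd gCnv R ((w, φ) ::ₘ (w, ψ) ::ₘ Γ) →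
      Der bar P gDia gPr gProd gCnv R ((w, Fml.or φ ψ) ::ₘ Γ)
  | andr {R : RAtms α} {Γ : LFmls α} {w : ℕ} {φ ψ : Fml α} :
      Der bar P gDia gPr gProd gCnv R ((w, φ) ::ₘ Γ) →
      Der bar P gDia gPr gProd gCnv R ((w, ψ) ::ₘ Γ) →
      Der bar P gDia gPr gProd gCnv R ((w, Fml.and φ ψ) ::ₘ Γ)
  | boxr {R : RAtms α} {Γ : LFmls α} {w u : ℕ} {x : α} {φ : Fml α} :
      ¬ occursIn u R ((w, Fml.box x φ) ::ₘ Γ) →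
      Der bar P gDia gPr gProd gCnv ((x, w, u) ::ₘ R) ((u, φ) ::ₘ Γ) →
      Der bar P gDia gPr gProd gCnv R ((w, Fml.box x φ) ::ₘ Γ)
  | diar {R : RAtms α} {Γ : LFmls α} {w u : ℕ} {x : α} {φ : Fml α} :
      gDia →
      Der bar P gDia gPr gProd gCnv ((x, w, u) ::ₘ R)
        ((w, Fml.dia x φ) ::ₘ (u, φ) ::ₘ Γ) →
      Der bar P gDia gPr gProd gCnv ((x, w, u) ::ₘ R) ((w, Fml.dia x φ) ::ₘ Γ)
  | pr {R : RAtms α} {Γ : LFmls α} {w u : ℕ} {x : α} {φ : Fml α} :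
      gPr → PropCond bar P R x w u →
      Der bar P gDia gPr gProd gCnv R ((w, Fml.dia x φ) ::ₘ (u, φ) ::ₘ Γ) →
      Der bar P gDia gPr gProd gCnv R ((w, Fml.dia x φ) ::ₘ Γ)
  | prodr {R C : RAtms α} {Γ : LFmls α} {x : α} {s : List α} {w u : ℕ} :
      gProd → (x, s) ∈ P → ChainR s w u C →
      Der bar P gDia gPr gProd gCnv (C + ((x, w, u) ::ₘ R)) Γ →
      Der bar P gDia gPr gProd gCnv (C + R) Γ
  | cnvr {R : RAtms α} {Γ : LFmls α} {x : α} {w u : ℕ} :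
      gCnv →
      Der bar P gDia gPr gProd gCnv ((x, w, u) ::ₘ (bar x, u, w) ::ₘ R) Γ →
      Der bar P gDia gPr gProd gCnv ((x, w, u) ::ₘ R) Γ

/-- The labelled calculus `G3Km(S)`. -/
abbrev G3Km {α : Type} (bar : α → α) (S : CFCST α bar) : RAtms α → LFmls α → Prop :=
  Der bar S.rules True False True True

/-- The refined labelled calculus `Km(S)L`. -/
abbrev KmL {α : Type} (bar : α → α) (S : CFCST α bar) : RAtms α → LFmls α → Prop :=
  Der bar S.rules False True False False

/-- Composite relation `R_{y₁⋯yₙ} = R_{y₁};⋯;R_{yₙ}` (the identity for `ε`). -/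
def RelChain {α W : Type} (rel : α → W → W → Prop) : List α → W → W → Prop
  | [], w, u => w = u
  | x :: s, w, u => ∃ v, rel x w v ∧ RelChain rel s v u

/-- `Km(S)`-models: `R_x̄ = R_x⁻¹` for all `x`, and `R_s ⊆ R_x` for every
production rule `x → s ∈ P`. -/
structure KmModel (α : Type) (bar : α → α) (P : Set (α × List α)) : Type 1 where
  W : Type
  nonempty : Nonempty W
  rel : α → W → W → Prop
  conv : ∀ (x : α) (w u : W), rel (bar x) w u ↔ rel x u w
  prodCond : ∀ (x : α) (s : List α), (x, s) ∈ P →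
    ∀ (w u : W), RelChain rel s w u → rel x w u
  val : ℕ → Set W

/-- Satisfaction in a `Km(S)`-model. -/
def Sat {α : Type} {bar : α → α} {P : Set (α × List α)} (M : KmModel α bar P) :
    M.W → Fml α → Prop
  | w, Fml.pos p => w ∈ M.val p
  | w, Fml.neg p => w ∉ M.val p
  | w, Fml.or φ ψ => Sat M w φ ∨ Sat M w ψ
  | w, Fml.and φ ψ => Sat M w φ ∧ Sat M w ψ
  | w, Fml.dia x φ => ∃ u, M.rel x w u ∧ Sat M u φ
  | w, Fml.box x φ => ∀ u, M.rel x w u → Sat M u φ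

/-- `Km(S)`-validity of a labelled sequent. -/
def SeqValid {α : Type} (bar : α → α) (P : Set (α × List α))
    (R : RAtms α) (Γ : LFmls α) : Prop :=
  ∀ (M : KmModel α bar P) (f : ℕ → M.W),
    (∀ x w u, (x, w, u) ∈ R → M.rel x (f w) (f u)) →
    ∃ w φ, (w, φ) ∈ Γ ∧ Sat M (f w) φ

/-- `Km(S)`-validity of a formula. -/
def FmlValid {α : Type} (bar : α → α) (P : Set (α × List α)) (φ : Fml α) : Prop :=
  ∀ (M : KmModel α bar P) (w : M.W), Sat M w φ

/-!
Soundness: a rewriting `x →*_S s` is read backwards in a model as `R_s ⊆ R_x`, and a propagation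
path labelled `s` is sent into `R_s`; hence the side condition of `(Pr_⟨x⟩)` forces `R_x`.

Completeness: a failed proof search is organised in rounds. In each round every formula of the
current underivable sequent is reduced once, a formula `⟨x⟩φ` being propagated along all paths
available at the start of the round. The limit is a pair of possibly infinite sets of atoms and
formulae which is saturated under the rules. Taking the labels as worlds and letting `R_x` be the
propagation relation yields a model, because propagation paths can be concatenated and reversed,
and every formula in the limit fails in it.
-/

variable {α : Type} {bar : α → α} {P : Set (α × List α)}

/-! ### Rewriting -/

/-- Closure of a set of production rules under converses, the defining property of a CFCST system
apart from finiteness. -/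
def ConvClosed (bar : α → α) (P : Set (α × List α)) : Prop :=
  ∀ x s, (x, s) ∈ P → (bar x, strConv bar s) ∈ P

theorem strConv_cons (c : α) (s : List α) : strConv bar (c :: s) = strConv bar s ++ [bar c] := by
  simp [strConv]

theorem strConv_append (s t : List α) :
    strConv bar (s ++ t) = strConv bar t ++ strConv bar s := by
  simp [strConv]

theorem OneStep.of_rule {x : α} {s : List α} (h : (x, s) ∈ P) : OneStep P [x] s :=
  ⟨[], [], x, s, h, by simp, by simp⟩

theorem OneStep.append_left {s t : List α} (l : List α) (h : OneStep P s t) :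
    OneStep P (l ++ s) (l ++ t) := by
  obtain ⟨u, v, x, r, hr, rfl, rfl⟩ := h
  exact ⟨l ++ u, v, x, r, hr, by simp, by simp⟩

theorem OneStep.append_right {s t : List α} (l : List α) (h : OneStep P s t) :
    OneStep P (s ++ l) (t ++ l) := by
  obtain ⟨u, v, x, r, hr, rfl, rfl⟩ := h
  exact ⟨u, v ++ l, x, r, hr, by simp, by simp⟩

theorem OneStep.conv (hP : ConvClosed bar P) {s t : List α} (h : OneStep P s t) :
    OneStep P (strConv bar s) (strConv bar t) := by
  obtain ⟨u, v, x, r, hr, rfl, rfl⟩ := h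
  refine ⟨strConv bar v, strConv bar u, bar x, strConv bar r, hP x r hr, ?_, ?_⟩ <;>
    simp [strConv_append, strConv_cons]

theorem reflTransGen_oneStep_append {s s' t t' : List α}
    (hs : Relation.ReflTransGen (OneStep P) s s') (ht : Relation.ReflTransGen (OneStep P) t t') :
    Relation.ReflTransGen (OneStep P) (s ++ t) (s' ++ t') :=
  (hs.lift (· ++ t) fun _ _ h => h.append_right t).trans
    (ht.lift (s' ++ ·) fun _ _ h => h.append_left s')

theorem Lang.conv (hP : ConvClosed bar P) {x : α} {s : List α} (h : Lang P x s) :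
    Lang P (bar x) (strConv bar s) :=
  Relation.ReflTransGen.lift (strConv bar) (fun _ _ h => OneStep.conv hP h) _ _ h

/-! ### Propagation paths -/

theorem Edge.conv (hbar : Function.Involutive bar) {R : RAtms α} {w u : ℕ} {c : α}
    (h : Edge bar R w u c) : Edge bar R u w (bar c) :=
  (Or.symm h).imp id fun hc => (hbar c).symm ▸ hc

theorem PPath.append {R : RAtms α} {w v u : ℕ} {s t : List α} (h : PPath bar R w v s)
    (h' : PPath bar R v u t) : PPath bar R w u (s ++ t) := by
  induction h with
  | nil => exact h'
  | cons e _ ih => exact .cons e (ih h')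

theorem PPath.mono {R R' : RAtms α} (hR : R ⊆ R') {w u : ℕ} {s : List α}
    (h : PPath bar R w u s) : PPath bar R' w u s := by
  induction h with
  | nil w => exact .nil w
  | cons e _ ih => exact .cons (e.imp (hR ·) (hR ·)) ih

theorem PPath.conv (hbar : Function.Involutive bar) {R : RAtms α} {w u : ℕ} {s : List α}
    (h : PPath bar R w u s) : PPath bar R u w (strConv bar s) := by
  induction h with
  | nil w => exact .nil w
  | cons e _ ih => exact strConv_cons (bar := bar) _ _ ▸ ih.append (.cons (e.conv hbar) (.nil _))

theorem PPath.eq_or_occursIn {R : RAtms α} {w u : ℕ} {s : List α} (h : PPath bar R w u s) :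
    u = w ∨ occursIn u R 0 := by
  induction h with
  | nil => exact .inl rfl
  | cons e _ ih =>
    rcases ih with rfl | h
    · exact .inr (.inl (e.elim (fun h => ⟨_, _, _, h, .inr rfl⟩) fun h => ⟨_, _, _, h, .inl rfl⟩))
    · exact .inr h

theorem PropCond.mono {R R' : RAtms α} (hR : R ⊆ R') {x : α} {w u : ℕ} :
    PropCond bar P R x w u → PropCond bar P R' x w u :=
  fun ⟨s, hp, hs⟩ => ⟨s, hp.mono hR, hs⟩

theorem PropCond.of_mem {R : RAtms α} {x : α} {w u : ℕ} (h : (x, w, u) ∈ R) :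
    PropCond bar P R x w u :=
  ⟨[x], .cons (.inl h) (.nil u), .refl⟩

theorem PropCond.conv (hbar : Function.Involutive bar) (hP : ConvClosed bar P) {R : RAtms α}
    {x : α} {w u : ℕ} : PropCond bar P R x w u → PropCond bar P R (bar x) u w :=
  fun ⟨_, hp, hs⟩ => ⟨_, hp.conv hbar, hs.conv hP⟩

theorem finite_setOf_occursIn (R : RAtms α) (Γ : LFmls α) : {v | occursIn v R Γ}.Finite := by
  refine (R.map (·.2.1) + R.map (·.2.2) + Γ.map Prod.fst).finite_toSet.subset ?_
  rintro v (⟨x, w, u, h, rfl | rfl⟩ | ⟨φ, h⟩) <;>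
    simp only [Set.mem_ofPred_eq, Multiset.mem_add, Multiset.mem_map]
  · exact .inl (.inl ⟨_, h, rfl⟩)
  · exact .inl (.inr ⟨_, h, rfl⟩)
  · exact .inr ⟨_, h, rfl⟩

theorem finite_setOf_propCond (bar : α → α) (P : Set (α × List α)) (R : RAtms α) (x : α) (w : ℕ) :
    {u | PropCond bar P R x w u}.Finite :=
  ((finite_setOf_occursIn R 0).insert w).subset fun _ ⟨_, hp, _⟩ => hp.eq_or_occursIn

/-! ### Soundness -/

/-- The interpretation `f` of the labels in `M` makes all relational atoms of `R` true. -/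
def Realizes (M : KmModel α bar P) (f : ℕ → M.W) (R : RAtms α) : Prop :=
  ∀ x w u, (x, w, u) ∈ R → M.rel x (f w) (f u)

/-- Some labelled formula of `Γ` is true in `M` under the interpretation `f` of the labels: the
succedent of a labelled sequent is read disjunctively. -/
def SatSome (M : KmModel α bar P) (f : ℕ → M.W) (Γ : LFmls α) : Prop :=
  ∃ w φ, (w, φ) ∈ Γ ∧ Sat M (f w) φ

section Soundness

variable {M : KmModel α bar P} {f g : ℕ → M.W} {R C : RAtms α} {Γ : LFmls α}

theorem realizes_cons {x : α} {w u : ℕ} :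
    Realizes M f ((x, w, u) ::ₘ R) ↔ M.rel x (f w) (f u) ∧ Realizes M f R := by
  simp only [Realizes, Multiset.mem_cons, Prod.mk.injEq]
  grind

theorem realizes_add : Realizes M f (C + R) ↔ Realizes M f C ∧ Realizes M f R := by
  simp only [Realizes, Multiset.mem_add]
  grind

theorem satSome_cons {w : ℕ} {φ : Fml α} :
    SatSome M f ((w, φ) ::ₘ Γ) ↔ Sat M (f w) φ ∨ SatSome M f Γ := by
  simp only [SatSome, Multiset.mem_cons, Prod.mk.injEq]
  grind

theorem Realizes.congr (hfg : ∀ x w u, (x, w, u) ∈ R → f w = g w ∧ f u = g u)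
    (h : Realizes M f R) : Realizes M g R := fun x w u hR =>
  (hfg x w u hR).1 ▸ (hfg x w u hR).2 ▸ h x w u hR

theorem SatSome.congr (hfg : ∀ w φ, (w, φ) ∈ Γ → f w = g w) : SatSome M f Γ → SatSome M g Γ :=
  fun ⟨w, φ, hΓ, hφ⟩ => ⟨w, φ, hΓ, hfg w φ hΓ ▸ hφ⟩

theorem relChain_singleton {W : Type} {rel : α → W → W → Prop} {x : α} {w u : W} :
    RelChain rel [x] w u ↔ rel x w u := by
  simp [RelChain]

theorem relChain_append {W : Type} {rel : α → W → W → Prop} {s t : List α} {w u : W} :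
    RelChain rel (s ++ t) w u ↔ ∃ v, RelChain rel s w v ∧ RelChain rel t v u := by
  induction s generalizing w with
  | nil => simp [RelChain]
  | cons x s ih =>
    simp only [List.cons_append, RelChain, ih]
    tauto

theorem RelChain.of_oneStep {s t : List α} (hst : OneStep P s t) {w u : M.W}
    (h : RelChain M.rel t w u) : RelChain M.rel s w u := by
  obtain ⟨l, l', x, r, hr, rfl, rfl⟩ := hst
  rw [List.append_assoc] at h
  obtain ⟨a, hl, h⟩ := relChain_append.1 h
  obtain ⟨b, hb, hl'⟩ := relChain_append.1 h
  exact relChain_append.2 ⟨a, hl, b, M.prodCond x r hr a b hb, hl'⟩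

theorem RelChain.rel_of_lang {x : α} {s : List α} (hs : Lang P x s) {w u : M.W}
    (h : RelChain M.rel s w u) : M.rel x w u := by
  refine relChain_singleton.1 ?_
  induction hs with
  | refl => exact h
  | tail _ hst ih => exact ih (h.of_oneStep hst)

theorem Realizes.relChain_of_pPath (hf : Realizes M f R) {w u : ℕ} {s : List α}
    (h : PPath bar R w u s) : RelChain M.rel s (f w) (f u) := by
  induction h with
  | nil => rfl
  | cons e _ ih => exact ⟨_, e.elim (hf _ _ _) fun h => (M.conv _ _ _).1 (hf _ _ _ h), ih⟩

theorem Realizes.rel_of_propCond (hf : Realizes M f R) {x : α} {w u : ℕ} :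
    PropCond bar P R x w u → M.rel x (f w) (f u) :=
  fun ⟨_, hp, hs⟩ => (hf.relChain_of_pPath hp).rel_of_lang hs

theorem Realizes.relChain_of_chainR {s : List α} {w u : ℕ} (h : ChainR s w u C)
    (hf : Realizes M f C) : RelChain M.rel s (f w) (f u) := by
  induction h with
  | nil => rfl
  | cons _ ih =>
    obtain ⟨hy, hC⟩ := realizes_cons.1 hf
    exact ⟨_, hy, ih hC⟩

theorem SatSome.boxr {w u : ℕ} {x : α} {φ : Fml α} (hu : ¬ occursIn u R ((w, .box x φ) ::ₘ Γ))
    (hf : Realizes M f R)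
    (hpremise : ∀ g, Realizes M g ((x, w, u) ::ₘ R) → SatSome M g ((u, φ) ::ₘ Γ)) :
    SatSome M f ((w, .box x φ) ::ₘ Γ) := by
  by_contra hfail
  rw [satSome_cons, not_or] at hfail
  refine hfail.1 fun v hv => ?_
  have hagree : ∀ v', occursIn v' R ((w, .box x φ) ::ₘ Γ) → f v' = Function.update f u v v' :=
    fun v' hv' => (Function.update_of_ne (by rintro rfl; exact hu hv') _ _).symm
  have hw : f w = Function.update f u v w := hagree w (.inr ⟨_, Multiset.mem_cons_self _ _⟩)
  have hR : Realizes M (Function.update f u v) ((x, w, u) ::ₘ R) :=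
    realizes_cons.2 ⟨by rwa [← hw, Function.update_self], hf.congr fun x a b hab =>
      ⟨hagree a (.inl ⟨x, a, b, hab, .inl rfl⟩), hagree b (.inl ⟨x, a, b, hab, .inr rfl⟩)⟩⟩
  rcases satSome_cons.1 (hpremise _ hR) with hφ | hΓ
  · rwa [Function.update_self] at hφ
  · exact absurd (hΓ.congr fun v' ψ hψ =>
      (hagree v' (.inr ⟨ψ, Multiset.mem_cons_of_mem hψ⟩)).symm) hfail.2

theorem Der.seqValid {gDia gPr gProd gCnv : Prop} (h : Der bar P gDia gPr gProd gCnv R Γ) :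
    SeqValid bar P R Γ := by
  intro M f hf
  change SatSome M f _
  change Realizes M f _ at hf
  induction h generalizing f with
  | id R Γ w p => exact satSome_cons.2 (or_iff_not_imp_left.2 fun h => satSome_cons.2 (.inl h))
  | orr _ ih =>
    simp only [satSome_cons, Sat] at ih ⊢
    exact or_assoc.2 (ih f hf)
  | andr _ _ ihφ ihψ =>
    simp only [satSome_cons, Sat] at ihφ ihψ ⊢
    exact and_or_right.2 ⟨ihφ f hf, ihψ f hf⟩
  | boxr hu _ ih => exact .boxr hu hf ih
  | diar _ _ ih =>
    have hxu := (realizes_cons.1 hf).1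
    simp only [satSome_cons, Sat] at ih ⊢
    exact (ih f hf).elim .inl (Or.imp_left fun hφ => ⟨_, hxu, hφ⟩)
  | pr _ hp _ ih =>
    have hxu := hf.rel_of_propCond hp
    simp only [satSome_cons, Sat] at ih ⊢
    exact (ih f hf).elim .inl (Or.imp_left fun hφ => ⟨_, hxu, hφ⟩)
  | prodr _ hs hC _ ih =>
    obtain ⟨hfC, hfR⟩ := realizes_add.1 hf
    have hxu := M.prodCond _ _ hs _ _ (hfC.relChain_of_chainR hC)
    exact ih f (realizes_add.2 ⟨hfC, realizes_cons.2 ⟨hxu, hfR⟩⟩)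
  | cnvr _ _ ih =>
    obtain ⟨hxu, hfR⟩ := realizes_cons.1 hf
    exact ih f (realizes_cons.2 ⟨hxu, realizes_cons.2 ⟨(M.conv _ _ _).2 hxu, hfR⟩⟩)

end Soundness

/-! ### Countermodels from Hintikka sets -/

/-- The propagation relation of a possibly infinite set `A` of relational atoms. Since a path uses
only finitely many atoms, it is the union of the propagation relations of the finite parts
of `A`. -/
def PropRel (bar : α → α) (P : Set (α × List α)) (A : Set (α × ℕ × ℕ)) (x : α) (w u : ℕ) : Prop :=
  ∃ R : RAtms α, (∀ a ∈ R, a ∈ A) ∧ PropCond bar P R x w u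

/-- Hintikka sets: a pair of a set `A` of relational atoms and a set `F` of labelled formulae that
is closed under the rules of the calculus read bottom-up and free of initial sequents. Formulae in
`F` are meant to be false, so the clause for `or` is conjunctive and the one for `and`
disjunctive. -/
structure IsHintikka (bar : α → α) (P : Set (α × List α)) (A : Set (α × ℕ × ℕ))
    (F : Set (ℕ × Fml α)) : Prop where
  consistent {w p : ℕ} : (w, .pos p) ∈ F → (w, .neg p) ∉ F
  or {w : ℕ} {φ ψ : Fml α} : (w, .or φ ψ) ∈ F → (w, φ) ∈ F ∧ (w, ψ) ∈ F
  and {w : ℕ} {φ ψ : Fml α} : (w, .and φ ψ) ∈ F → (w, φ) ∈ F ∨ (w, ψ) ∈ F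
  dia {w u : ℕ} {x : α} {φ : Fml α} : (w, .dia x φ) ∈ F → PropRel bar P A x w u → (u, φ) ∈ F
  box {w : ℕ} {x : α} {φ : Fml α} : (w, .box x φ) ∈ F → ∃ u, (x, w, u) ∈ A ∧ (u, φ) ∈ F

section Countermodel

variable {A : Set (α × ℕ × ℕ)} {F : Set (ℕ × Fml α)}

theorem PropRel.of_mem {x : α} {w u : ℕ} (h : (x, w, u) ∈ A) : PropRel bar P A x w u :=
  ⟨{(x, w, u)}, by simpa using h, .of_mem (Multiset.mem_singleton_self _)⟩

theorem PropRel.conv (hbar : Function.Involutive bar) (hP : ConvClosed bar P) {x : α} {w u : ℕ} :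
    PropRel bar P A x w u → PropRel bar P A (bar x) u w :=
  fun ⟨R, hR, h⟩ => ⟨R, hR, h.conv hbar hP⟩

theorem exists_pPath_of_relChain_propRel {s : List α} {w u : ℕ}
    (h : RelChain (PropRel bar P A) s w u) :
    ∃ (R : RAtms α) (t : List α), (∀ a ∈ R, a ∈ A) ∧ PPath bar R w u t ∧
      Relation.ReflTransGen (OneStep P) s t := by
  induction s generalizing w with
  | nil =>
    obtain rfl : w = u := h
    exact ⟨0, [], by simp, .nil w, .refl⟩
  | cons x s ih =>
    obtain ⟨v, ⟨R, hR, t, hp, ht⟩, hs⟩ := h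
    obtain ⟨R', t', hR', hp', ht'⟩ := ih hs
    refine ⟨R + R', t ++ t', fun a ha => (Multiset.mem_add.1 ha).elim (hR a) (hR' a), ?_, ?_⟩
    · exact (hp.mono fun _ h => Multiset.mem_add.2 (.inl h)).append
        (hp'.mono fun _ h => Multiset.mem_add.2 (.inr h))
    · exact reflTransGen_oneStep_append (s := [x]) ht ht'

theorem PropRel.of_relChain {x : α} {s : List α} (hs : (x, s) ∈ P) {w u : ℕ}
    (h : RelChain (PropRel bar P A) s w u) : PropRel bar P A x w u := by
  obtain ⟨R, t, hR, hp, ht⟩ := exists_pPath_of_relChain_propRel h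
  exact ⟨R, hR, t, hp, ht.head (.of_rule hs)⟩

/-- The model induced by a set `A` of relational atoms and a set `F` of labelled formulae to be
falsified: the worlds are the labels, accessibility is propagation along `A`, and an atom is true
wherever `F` does not require it to be false. -/
def counterModel (hbar : Function.Involutive bar) (hP : ConvClosed bar P) (A : Set (α × ℕ × ℕ))
    (F : Set (ℕ × Fml α)) : KmModel α bar P where
  W := ℕ
  nonempty := inferInstance
  rel := PropRel bar P A
  conv x _ _ := ⟨fun h => hbar x ▸ h.conv hbar hP, fun h => h.conv hbar hP⟩
  prodCond _ _ hs _ _ h := .of_relChain hs h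
  val p := {w | (w, .pos p) ∉ F}

theorem IsHintikka.not_sat_counterModel (hF : IsHintikka bar P A F)
    (hbar : Function.Involutive bar) (hP : ConvClosed bar P) {w : ℕ} {φ : Fml α}
    (h : (w, φ) ∈ F) : ¬ Sat (counterModel hbar hP A F) w φ := by
  induction φ generalizing w with
  | pos p => exact fun hs => hs h
  | neg p => exact fun hs => hs fun hpos => hF.consistent hpos h
  | or φ ψ ihφ ihψ => exact not_or.2 ⟨ihφ (hF.or h).1, ihψ (hF.or h).2⟩
  | and φ ψ ihφ ihψ => exact fun hs => (hF.and h).elim (ihφ · hs.1) (ihψ · hs.2)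
  | dia x φ ih => exact fun ⟨_, hu, hs⟩ => ih (hF.dia h hu) hs
  | box x φ ih =>
    obtain ⟨u, hu, hφ⟩ := hF.box h
    exact fun hs => ih hφ (hs u (.of_mem hu))

end Countermodel

/-! ### Proof search -/

/-- `Reduced bar P R₀ R Γ a` states that the sequent `R ⊢ Γ` contains the formulae required by a
backward application of the rule for the labelled formula `a`. A diamond is propagated only along
the paths of `R₀`, the atoms present when `a` was treated, as later treatments may create
new paths; diamonds and literals moreover stay in `Γ`. -/
def Reduced (bar : α → α) (P : Set (α × List α)) (R₀ R : RAtms α) (Γ : LFmls α) :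
    ℕ × Fml α → Prop
  | (w, .pos p) => (w, .pos p) ∈ Γ
  | (w, .neg p) => (w, .neg p) ∈ Γ
  | (w, .or φ ψ) => (w, φ) ∈ Γ ∧ (w, ψ) ∈ Γ
  | (w, .and φ ψ) => (w, φ) ∈ Γ ∨ (w, ψ) ∈ Γ
  | (w, .dia x φ) => (w, .dia x φ) ∈ Γ ∧ ∀ u, PropCond bar P R₀ x w u → (u, φ) ∈ Γ
  | (w, .box x φ) => ∃ u, (x, w, u) ∈ R ∧ (u, φ) ∈ Γ

/-- An infinite sequence of sequents `r n ⊢ g n`, none of them initial, in which every formula of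
each sequent is reduced in the next one. It plays the role of an open branch in a failed
proof search. -/
structure IsReductionSeq (bar : α → α) (P : Set (α × List α)) (r : ℕ → RAtms α)
    (g : ℕ → LFmls α) : Prop where
  mono : Monotone r
  consistent {n w p : ℕ} : (w, .pos p) ∈ g n → (w, .neg p) ∉ g n
  reduced {n : ℕ} {a : ℕ × Fml α} : a ∈ g n → Reduced bar P (r n) (r (n + 1)) (g (n + 1)) a

theorem Reduced.mono {R₀ R₀' R R' : RAtms α} {Γ Γ' : LFmls α} (h₀ : R₀' ≤ R₀) (hR : R ≤ R')
    (hΓ : Γ ≤ Γ') {a : ℕ × Fml α} (h : Reduced bar P R₀ R Γ a) : Reduced bar P R₀' R' Γ' a := by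
  have hmem {b} : b ∈ Γ → b ∈ Γ' := Multiset.mem_of_le hΓ
  obtain ⟨w, χ⟩ := a
  cases χ with
  | pos p => exact hmem h
  | neg p => exact hmem h
  | or φ ψ => exact ⟨hmem h.1, hmem h.2⟩
  | and φ ψ => exact h.imp hmem hmem
  | dia x φ => exact ⟨hmem h.1, fun u hu => hmem (h.2 u (hu.mono (Multiset.subset_of_le h₀)))⟩
  | box x φ =>
    obtain ⟨u, hu, hφ⟩ := h
    exact ⟨u, Multiset.mem_of_le hR hu, hmem hφ⟩

section ReductionSeq

variable {r : ℕ → RAtms α} {g : ℕ → LFmls α}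

theorem IsReductionSeq.mem_of_le (hrg : IsReductionSeq bar P r g) {a : ℕ × Fml α}
    (ha : ∀ {R₀ R Γ}, Reduced bar P R₀ R Γ a → a ∈ Γ) {m n : ℕ} (hmn : m ≤ n) (h : a ∈ g m) :
    a ∈ g n :=
  Nat.le_induction h (fun _ _ ih => ha (hrg.reduced ih)) n hmn

theorem PropRel.exists_propCond_of_monotone (hr : Monotone r) {x : α} {w u : ℕ} :
    PropRel bar P {a | ∃ n, a ∈ r n} x w u → ∃ n, PropCond bar P (r n) x w u := by
  rintro ⟨R, hR, h⟩
  have heventually : ∀ a ∈ R, ∀ᶠ n in Filter.atTop, a ∈ r n := fun a ha =>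
    let ⟨m, hm⟩ := hR a ha
    (Filter.eventually_ge_atTop m).mono fun n hmn => Multiset.mem_of_le (hr hmn) hm
  obtain ⟨n, hn⟩ := ((Filter.eventually_all_finite R.finite_toSet).2 heventually).exists
  exact ⟨n, h.mono fun a ha => hn a ha⟩

theorem IsReductionSeq.isHintikka (hrg : IsReductionSeq bar P r g) :
    IsHintikka bar P {a | ∃ n, a ∈ r n} {a | ∃ n, a ∈ g n} where
  consistent := fun ⟨m, hm⟩ ⟨n, hn⟩ =>
    hrg.consistent (hrg.mem_of_le id (le_max_left m n) hm) (hrg.mem_of_le id (le_max_right m n) hn)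
  or := fun ⟨n, h⟩ => (hrg.reduced h).imp (⟨n + 1, ·⟩) (⟨n + 1, ·⟩)
  and := fun ⟨n, h⟩ => (hrg.reduced h).imp (⟨n + 1, ·⟩) (⟨n + 1, ·⟩)
  dia := fun ⟨m, hm⟩ hu => by
    obtain ⟨n, hn⟩ := hu.exists_propCond_of_monotone hrg.mono
    have hmax := hrg.mem_of_le And.left (le_max_left m n) hm
    have hrn : r n ⊆ r (max m n) := Multiset.subset_of_le (hrg.mono (le_max_right m n))
    exact ⟨max m n + 1, (hrg.reduced hmax).2 _ (hn.mono hrn)⟩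
  box := fun ⟨n, h⟩ =>
    let ⟨u, hu, hφ⟩ := hrg.reduced h
    ⟨u, ⟨n + 1, hu⟩, ⟨n + 1, hφ⟩⟩

end ReductionSeq

section ProofSearch

variable {gDia gProd gCnv : Prop} {R : RAtms α} {Γ : LFmls α}

theorem Der.of_pos_of_neg {gPr : Prop} {w p : ℕ} (hpos : (w, .pos p) ∈ Γ)
    (hneg : (w, .neg p) ∈ Γ) : Der bar P gDia gPr gProd gCnv R Γ := by
  obtain ⟨Γ, rfl⟩ := Multiset.exists_cons_of_mem hpos
  obtain ⟨Γ, rfl⟩ := Multiset.exists_cons_of_mem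
    ((Multiset.mem_cons.1 hneg).resolve_left (by simp))
  exact .id R Γ w p

theorem Der.pr_map {x : α} {w : ℕ} {φ : Fml α} {U : Multiset ℕ}
    (hU : ∀ u ∈ U, PropCond bar P R x w u)
    (h : Der bar P gDia True gProd gCnv R ((w, .dia x φ) ::ₘ (U.map (·, φ) + Γ))) :
    Der bar P gDia True gProd gCnv R ((w, .dia x φ) ::ₘ Γ) := by
  induction U using Multiset.induction_on generalizing Γ with
  | empty => simpa using h
  | cons u U ih =>
    refine .pr trivial (hU u (Multiset.mem_cons_self u U)) (ih ?_ ?_)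
    · exact fun v hv => hU v (Multiset.mem_cons_of_mem hv)
    · simpa using h

theorem exists_reduced_of_not_der {a : ℕ × Fml α}
    (h : ¬ Der bar P gDia True gProd gCnv R (a ::ₘ Γ)) :
    ∃ (C : RAtms α) (Δ : LFmls α), Reduced bar P R (C + R) Δ a ∧
      ¬ Der bar P gDia True gProd gCnv (C + R) (Δ + Γ) := by
  obtain ⟨w, χ⟩ := a
  cases χ with
  | pos p =>
    exact ⟨0, {(w, .pos p)}, Multiset.mem_singleton_self _, by simpa using h⟩
  | neg p =>
    exact ⟨0, {(w, .neg p)}, Multiset.mem_singleton_self _, by simpa using h⟩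
  | or φ ψ =>
    refine ⟨0, {(w, φ), (w, ψ)}, by simp [Reduced], fun hd => h (.orr ?_)⟩
    simpa using hd
  | and φ ψ =>
    by_cases hφ : Der bar P gDia True gProd gCnv R ((w, φ) ::ₘ Γ)
    · refine ⟨0, {(w, ψ)}, by simp [Reduced], fun hψ => h (.andr hφ ?_)⟩
      simpa using hψ
    · exact ⟨0, {(w, φ)}, by simp [Reduced], by simpa using hφ⟩
  | dia x φ =>
    have hU := finite_setOf_propCond bar P R x w
    refine ⟨0, (w, .dia x φ) ::ₘ hU.toFinset.val.map (·, φ), ?_,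
      fun hd => h (.pr_map (U := hU.toFinset.val) ?_ ?_)⟩
    · exact ⟨by simp, fun u hu => by simp [hu]⟩
    · simp
    · simpa using hd
  | box x φ =>
    obtain ⟨u, hu⟩ := (finite_setOf_occursIn R ((w, .box x φ) ::ₘ Γ)).exists_notMem
    refine ⟨{(x, w, u)}, {(u, φ)}, ⟨u, by simp, by simp⟩, fun hd => h (.boxr hu ?_)⟩
    simpa using hd

theorem exists_forall_reduced_of_not_der {L : LFmls α}
    (h : ¬ Der bar P gDia True gProd gCnv R (L + Γ)) :
    ∃ (R' : RAtms α) (Γ' : LFmls α), R ≤ R' ∧ Γ ≤ Γ' ∧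
      (∀ a ∈ L, Reduced bar P R R' Γ' a) ∧ ¬ Der bar P gDia True gProd gCnv R' Γ' := by
  induction L using Multiset.induction_on generalizing R Γ with
  | empty => exact ⟨R, Γ, le_rfl, le_rfl, by simp, by simpa using h⟩
  | cons a L ih =>
    rw [Multiset.cons_add] at h
    obtain ⟨C, Δ, ha, h⟩ := exists_reduced_of_not_der h
    rw [add_left_comm] at h
    obtain ⟨R', Γ', hR', hΓ', hL, h⟩ := ih h
    have hRC : R ≤ C + R := Multiset.le_add_left R C
    refine ⟨R', Γ', hRC.trans hR', (Multiset.le_add_left Γ Δ).trans hΓ',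
      Multiset.forall_mem_cons.2 ⟨?_, fun b hb => (hL b hb).mono hRC le_rfl le_rfl⟩, h⟩
    exact ha.mono le_rfl hR' ((Multiset.le_add_right Δ Γ).trans hΓ')

theorem exists_isReductionSeq_of_not_der (h : ¬ Der bar P gDia True gProd gCnv R Γ) :
    ∃ (r : ℕ → RAtms α) (g : ℕ → LFmls α), r 0 = R ∧ g 0 = Γ ∧ IsReductionSeq bar P r g := by
  have hround : ∀ q : {q : RAtms α × LFmls α // ¬ Der bar P gDia True gProd gCnv q.1 q.2},
      ∃ q' : {q : RAtms α × LFmls α // ¬ Der bar P gDia True gProd gCnv q.1 q.2},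
        q.1.1 ≤ q'.1.1 ∧ ∀ a ∈ q.1.2, Reduced bar P q.1.1 q'.1.1 q'.1.2 a := by
    rintro ⟨⟨R, Γ⟩, hq⟩
    obtain ⟨R', Γ', hR, -, hΓ, hq'⟩ := exists_forall_reduced_of_not_der (Γ := 0) (by simpa using hq)
    exact ⟨⟨(R', Γ'), hq'⟩, hR, hΓ⟩
  choose next hle hred using hround
  let q (n : ℕ) := next^[n] ⟨(R, Γ), h⟩
  have hq (n : ℕ) : q (n + 1) = next (q n) := Function.iterate_succ_apply' next n _
  refine ⟨fun n => (q n).1.1, fun n => (q n).1.2, rfl, rfl, ?_, ?_, ?_⟩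
  · exact monotone_nat_of_le_succ fun n => hq n ▸ hle (q n)
  · exact fun {n} _ _ hpos hneg => (q n).2 (.of_pos_of_neg hpos hneg)
  · exact fun {n} a ha => by
      rw [hq n]
      exact hred (q n) a ha

end ProofSearch

theorem kmL_sound_complete_general (hbar : Function.Involutive bar) (hP : ConvClosed bar P)
    (gDia gProd gCnv : Prop) (R : RAtms α) (Γ : LFmls α) :
    Der bar P gDia True gProd gCnv R Γ ↔ SeqValid bar P R Γ := by
  refine ⟨Der.seqValid, fun hvalid => by_contra fun hder => ?_⟩
  obtain ⟨r, g, rfl, rfl, hrg⟩ := exists_isReductionSeq_of_not_der hder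
  obtain ⟨w, φ, hφ, hsat⟩ := hvalid (counterModel hbar hP {a | ∃ n, a ∈ r n} {a | ∃ n, a ∈ g n})
    id fun _ _ _ h => .of_mem ⟨0, h⟩
  exact hrg.isHintikka.not_sat_counterModel hbar hP ⟨0, hφ⟩ hsat

/-- Let `S` be a CFCST system over `Σ`.
(i) Every labelled sequent derivable in `Km(S)L` is `Km(S)`-valid.
(ii) For every `Km(S)`-valid formula `φ`, the labelled sequent `∅ ⊢ w:φ` is
derivable in `Km(S)L`. -/
theorem kmL_sound_complete {α : Type} (bar : α → α)
    (hbar : Function.Involutive bar) (S : CFCST α bar) :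
    (∀ (R : RAtms α) (Γ : LFmls α), KmL bar S R Γ → SeqValid bar S.rules R Γ) ∧
    (∀ (φ : Fml α) (w : ℕ), FmlValid bar S.rules φ →
      KmL bar S (0 : RAtms α) ({(w, φ)} : LFmls α)) := by
  have hder := kmL_sound_complete_general hbar (fun x s => (S.closed x s).1) False False False
  exact ⟨fun R Γ => (hder R Γ).1, fun φ w h => (hder 0 {(w, φ)}).2 fun M f _ =>
    ⟨w, φ, Multiset.mem_singleton_self _, h M (f w)⟩⟩

end GrammarLogic
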